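/- arXiv:1612.06591 — 3 statements merged into one kernel-verified Lean document; each statement's English description precedes it below -/
import Mathlib

section
/- For every ν ∈ (0,1] ∖ {√3/2} one has c₄(ν) ≥ 0. -/
/-- Υ_ν := √(1 − ν²). -/
noncomputable def Ups (ν : ℝ) : ℝ := Real.sqrt (1 - ν ^ 2)

/-- w_ν := Υ_ν · cot(π Υ_ν / 2) for ν ∈ [0,1), with w_1 := 2/π (continuous extension). -/
noncomputable def w (ν : ℝ) : ℝ :=
  if ν = 1 then 2 / Real.pi else Ups ν * Real.cot (Real.pi * Ups ν / 2)

/-- η_ν := (√(9+4ν²) − 4ν)/(3(1 − 2 w_ν)) for ν ≠ √3/2, and η_{√3/2} := 1/(√3 (π−2)). -/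
noncomputable def eta (ν : ℝ) : ℝ :=
  if ν = Real.sqrt 3 / 2 then 1 / (Real.sqrt 3 * (Real.pi - 2))
  else (Real.sqrt (9 + 4 * ν ^ 2) - 4 * ν) / (3 * (1 - 2 * w ν))

/-- c₂(ν) as in the paper. -/
noncomputable def c2 (ν : ℝ) : ℝ :=
  (16 * ν * Real.sqrt (9 + 4 * ν ^ 2) / 9) *
    (72 * (5 + 2 * ν ^ 2) - 1764 * ν / Real.sqrt (9 + 4 * ν ^ 2)
      + (Real.sqrt (9 + 4 * ν ^ 2) - 4 * ν) ^ 2 *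
        (-4 + 9 * Real.pi ^ 2 * (Real.pi - 4) ^ 2 / (4 * (Real.pi - 2) ^ 2)
          - (3 * Real.pi * (4 - Real.pi) / (2 * (Real.pi - 2))
              + 3 * (Real.pi - 2) / (1 - 2 * w ν)) ^ 2))

/-- c₄(ν) := (c₂(ν)+3136ν²)²/(256ν²(9+4ν²)) − 3584ν² + 256ν√(9+4ν²)(1−η_ν²). -/
noncomputable def c4 (ν : ℝ) : ℝ :=
  (c2 ν + 3136 * ν ^ 2) ^ 2 / (256 * ν ^ 2 * (9 + 4 * ν ^ 2)) - 3584 * ν ^ 2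
    + 256 * ν * Real.sqrt (9 + 4 * ν ^ 2) * (1 - eta ν ^ 2)

lemma hasSum_congr_aux {f g : ℕ → ℝ} {a b : ℝ} (h : HasSum g b) (hf : f = g) (hab : a = b) :
    HasSum f a := by
  subst hf hab
  exact h

/-- Mittag-Leffler expansion of the cotangent, in the form we need. -/
lemma cot_hasSum (u : ℝ) (h0 : 0 < u) (h1 : u ≤ 1) :
    HasSum (fun n : ℕ => u ^ 2 / (4 * ((n : ℝ) + 1) ^ 2 - u ^ 2))
      (1 / 2 - Real.pi / 4 * (u * Real.cot (Real.pi * u / 2))) := by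
  have hz : ((u / 2 : ℝ) : ℂ) ∈ Complex.integerComplement := by
    rintro ⟨k, hk⟩
    have hk' : (k : ℝ) = u / 2 := by exact_mod_cast hk
    have a : (0 : ℝ) < k := by rw [hk']; linarith
    have b : (k : ℝ) < 1 := by rw [hk']; linarith
    have a' : 0 < k := by exact_mod_cast a
    have b' : k < 1 := by exact_mod_cast b
    omega
  have hs := (summable_cotTerm hz).hasSum
  have hr := cot_series_rep' hz
  have hs2 : HasSum (fun n : ℕ => (((1 / (u / 2 - ((n : ℝ) + 1)) + 1 / (u / 2 + ((n : ℝ) + 1))) : ℝ) : ℂ))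
      ((Real.pi * Real.cot (Real.pi * (u / 2)) - 1 / (u / 2) : ℝ) : ℂ) := by
    convert hs using 1
    · funext n
      simp [cotTerm]
    · simp only [cotTerm]
      rw [← hr]
      push_cast
      rfl
  have hs3 := (Complex.hasSum_ofReal.mp hs2).mul_left (-(u / 4))
  refine (hasSum_congr_aux hs3 ?_ ?_)
  · funext n
    have hn : (0 : ℝ) ≤ n := Nat.cast_nonneg n
    have e1 : u - 2 * ((n : ℝ) + 1) ≠ 0 := by intro h; linarith
    have e2 : u + 2 * ((n : ℝ) + 1) ≠ 0 := by intro h; linarith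
    have e3 : 4 * ((n : ℝ) + 1) ^ 2 - u ^ 2 ≠ 0 := by
      have : 4 * ((n : ℝ) + 1) ^ 2 - u ^ 2 = -((u - 2 * ((n : ℝ) + 1)) * (u + 2 * ((n : ℝ) + 1))) := by ring
      rw [this]
      exact neg_ne_zero.mpr (mul_ne_zero e1 e2)
    have e4 : u / 2 - ((n : ℝ) + 1) ≠ 0 := by intro h; linarith
    have e5 : u / 2 + ((n : ℝ) + 1) ≠ 0 := by intro h; linarith
    rw [div_add_div _ _ e4 e5, mul_div_assoc', div_eq_div_iff e3 (mul_ne_zero e4 e5)]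
    ring
  · rw [show Real.pi * (u / 2) = Real.pi * u / 2 by ring]
    field_simp
    ring

lemma w_hasSum (ν : ℝ) (h0 : 0 < ν) (h1 : ν ≤ 1) :
    HasSum (fun n : ℕ => (1 - ν ^ 2) / (4 * ((n : ℝ) + 1) ^ 2 - (1 - ν ^ 2)))
      (1 / 2 - Real.pi / 4 * w ν) := by
  unfold w
  split_ifs with h
  · subst h
    have : (1 : ℝ) / 2 - Real.pi / 4 * (2 / Real.pi) = 0 := by
      field_simp
      norm_num
    rw [this]
    simpa using (hasSum_zero : HasSum (fun _ : ℕ => (0 : ℝ)) 0)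
  · have h2 : ν < 1 := lt_of_le_of_ne h1 h
    have hp : 0 < 1 - ν ^ 2 := by nlinarith
    have h3 : Ups ν ^ 2 = 1 - ν ^ 2 := Real.sq_sqrt hp.le
    have := cot_hasSum (Ups ν) (Real.sqrt_pos.mpr hp) (by
      unfold Ups
      rw [Real.sqrt_le_left (by norm_num)]
      nlinarith)
    rwa [h3] at this

/-- Lower bound for the chord slope. -/
lemma slope_bound (ν : ℝ) (h0 : 0 < ν) (h1 : ν ≤ 1) (h : ν ^ 2 ≠ 3 / 4) :
    (4 - ν ^ 2) / 12 ≤ (1 - 2 * w ν) / (3 - 4 * ν ^ 2) := by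
  have hpi := Real.pi_gt_d2
  have hpi0 := Real.pi_pos
  have hA := w_hasSum ν h0 h1
  have hB := cot_hasSum (1 / 2) (by norm_num) (by norm_num)
  have hC := cot_hasSum 1 (by norm_num) (by norm_num)
  have c1 : Real.cot (Real.pi * (1 / 2) / 2) = 1 := by
    rw [show Real.pi * (1 / 2) / 2 = Real.pi / 4 by ring, Real.cot_eq_cos_div_sin,
      Real.cos_pi_div_four, Real.sin_pi_div_four]
    field_simp
  have c2 : Real.cot (Real.pi * 1 / 2) = 0 := by
    rw [mul_one, Real.cot_eq_cos_div_sin, Real.cos_pi_div_two]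
    simp
  rw [c1] at hB
  rw [c2] at hC
  have hnu : ν ^ 2 ≤ 1 := by nlinarith
  have hnu0 : 0 < ν ^ 2 := by positivity
  have hne : 3 / 4 - ν ^ 2 ≠ 0 := by
    intro h'
    apply h
    linarith
  -- divided differences
  have hD := (hA.sub hB).mul_left (1 / (3 / 4 - ν ^ 2))
  have hE := (hC.sub hB).mul_left (4 / 3 : ℝ)
  have hF := (hE.mul_left (1 / 15 : ℝ)).add
    (hasSum_ite_eq (0 : ℕ) ((4 / 15 * (16 / 45) : ℝ)))
  have hG := hD.add (hF.mul_left (ν ^ 2))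
  have key := hasSum_le (fun n => ?_) hE hG
  · set W := w ν
    have e : 1 / (3 / 4 - ν ^ 2) * (1 / 2 - Real.pi / 4 * W - (1 / 2 - Real.pi / 4 * (1 / 2 * 1)))
        = Real.pi / 2 * ((1 - 2 * W) / (3 - 4 * ν ^ 2)) := by
      have : 3 - 4 * ν ^ 2 ≠ 0 := by
        intro h'
        apply hne
        linarith
      rw [show 3 / 4 - ν ^ 2 = (3 - 4 * ν ^ 2) / 4 by ring]
      field_simp
      ring
    rw [e] at key
    set Q := (1 - 2 * W) / (3 - 4 * ν ^ 2)
    by_contra hc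
    push Not at hc
    have k2 : Real.pi / 2 * Q < Real.pi / 2 * ((4 - ν ^ 2) / 12) := by gcongr
    nlinarith
  · have hn : (0 : ℝ) ≤ n := Nat.cast_nonneg n
    have hN : (1 : ℝ) ≤ ((n : ℝ) + 1) ^ 2 := by nlinarith
    have d1 : 0 < 4 * ((n : ℝ) + 1) ^ 2 - (1 - ν ^ 2) := by nlinarith
    have d2 : 0 < 4 * ((n : ℝ) + 1) ^ 2 - (1 / 2) ^ 2 := by nlinarith
    have d3 : 0 < 4 * ((n : ℝ) + 1) ^ 2 - 1 ^ 2 := by nlinarith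
    have E1 : 4 / 3 * (1 ^ 2 / (4 * ((n : ℝ) + 1) ^ 2 - 1 ^ 2) -
        (1 / 2) ^ 2 / (4 * ((n : ℝ) + 1) ^ 2 - (1 / 2) ^ 2)) =
        4 * ((n : ℝ) + 1) ^ 2 / ((4 * ((n : ℝ) + 1) ^ 2 - 1 ^ 2) * (4 * ((n : ℝ) + 1) ^ 2 - (1 / 2) ^ 2)) := by
      rw [div_sub_div _ _ d3.ne' d2.ne', mul_div_assoc']
      congr 1
      ring
    have E2 : 1 / (3 / 4 - ν ^ 2) * ((1 - ν ^ 2) / (4 * ((n : ℝ) + 1) ^ 2 - (1 - ν ^ 2)) -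
        (1 / 2) ^ 2 / (4 * ((n : ℝ) + 1) ^ 2 - (1 / 2) ^ 2)) =
        4 * ((n : ℝ) + 1) ^ 2 / ((4 * ((n : ℝ) + 1) ^ 2 - (1 - ν ^ 2)) * (4 * ((n : ℝ) + 1) ^ 2 - (1 / 2) ^ 2)) := by
      rw [div_sub_div _ _ d1.ne' d2.ne', div_mul_div_comm, div_eq_div_iff
        (mul_ne_zero hne (mul_ne_zero d1.ne' d2.ne')) (mul_ne_zero d1.ne' d2.ne')]
      ring
    simp only [E1, E2]
    have E3 : 4 * ((n : ℝ) + 1) ^ 2 / ((4 * ((n : ℝ) + 1) ^ 2 - (1 - ν ^ 2)) * (4 * ((n : ℝ) + 1) ^ 2 - (1 / 2) ^ 2))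
        = 4 * ((n : ℝ) + 1) ^ 2 / ((4 * ((n : ℝ) + 1) ^ 2 - 1 ^ 2) * (4 * ((n : ℝ) + 1) ^ 2 - (1 / 2) ^ 2))
          - ν ^ 2 * (4 * ((n : ℝ) + 1) ^ 2 / ((4 * ((n : ℝ) + 1) ^ 2 - 1 ^ 2) * (4 * ((n : ℝ) + 1) ^ 2 - (1 / 2) ^ 2)))
            * (1 / (4 * ((n : ℝ) + 1) ^ 2 - (1 - ν ^ 2))) := by
      set N := 4 * ((n : ℝ) + 1) ^ 2
      have := d1.ne'
      have := d2.ne'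
      have := d3.ne'
      have hcancel : (N - (1 - ν ^ 2)) * (1 / (N - (1 - ν ^ 2))) = 1 := by
        field_simp
      rw [div_eq_iff (mul_ne_zero d1.ne' d2.ne')]
      have hc2 : N / ((N - 1 ^ 2) * (N - (1 / 2) ^ 2)) * ((N - 1 ^ 2) * (N - (1 / 2) ^ 2)) = N :=
        div_mul_cancel₀ _ (mul_ne_zero d3.ne' d2.ne')
      set T := N / ((N - 1 ^ 2) * (N - (1 / 2) ^ 2))
      linear_combination (-1) * hc2 + (ν ^ 2 * T * (N - (1 / 2) ^ 2)) * hcancel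
    rw [E3]
    rcases Nat.eq_zero_or_pos n with hz | hpos
    · subst hz
      simp only [if_true, Nat.cast_zero]
      have : 1 / (4 * ((0 : ℝ) + 1) ^ 2 - (1 - ν ^ 2)) ≤ 1 / 3 :=
        one_div_le_one_div_of_le (by norm_num) (by nlinarith)
      norm_num at this ⊢
      nlinarith
    · rw [if_neg (by omega)]
      have hn1 : (1 : ℝ) ≤ n := by exact_mod_cast hpos
      have : 1 / (4 * ((n : ℝ) + 1) ^ 2 - (1 - ν ^ 2)) ≤ 1 / 15 :=
        one_div_le_one_div_of_le (by norm_num) (by nlinarith)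
      have hT : 0 ≤ ν ^ 2 * (4 * ((n : ℝ) + 1) ^ 2 / ((4 * ((n : ℝ) + 1) ^ 2 - 1 ^ 2) * (4 * ((n : ℝ) + 1) ^ 2 - (1 / 2) ^ 2))) := by
        positivity
      have := mul_le_mul_of_nonneg_left this hT
      linarith

lemma s_poly (ν : ℝ) (h0 : 0 ≤ ν) (hv1 : 0 ≤ 1 - ν) :
    0 ≤ 12.6 - 30.4 * ν + 14.57 * ν ^ 2 + 9.07 * ν ^ 3 - 4.43 * ν ^ 4 - 0.93 * ν ^ 5 := by
  rcases le_total ν (4 / 5) with h | h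
  · have h' : 0 ≤ 4 / 5 - ν := by linarith
    linarith [mul_nonneg (pow_nonneg h0 0) (pow_nonneg h' 5), mul_nonneg (pow_nonneg h0 1) (pow_nonneg h' 4), mul_nonneg (pow_nonneg h0 2) (pow_nonneg h' 3), mul_nonneg (pow_nonneg h0 3) (pow_nonneg h' 2), mul_nonneg (pow_nonneg h0 4) (pow_nonneg h' 1), mul_nonneg (pow_nonneg h0 5) (pow_nonneg h' 0)]
  · have h' : 0 ≤ ν - 4 / 5 := by linarith
    linarith [mul_nonneg (pow_nonneg h' 0) (pow_nonneg hv1 5), mul_nonneg (pow_nonneg h' 1) (pow_nonneg hv1 4), mul_nonneg (pow_nonneg h' 2) (pow_nonneg hv1 3), mul_nonneg (pow_nonneg h' 3) (pow_nonneg hv1 2), mul_nonneg (pow_nonneg h' 4) (pow_nonneg hv1 1), mul_nonneg (pow_nonneg h' 5) (pow_nonneg hv1 0)]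

lemma b_poly (ν : ℝ) (h0 : 0 ≤ ν) (hv1 : 0 ≤ 1 - ν) :
    0 ≤ (22193/7500) * ν ^ 0 + (-4547407/450000) * ν ^ 1 + (961931/75000) * ν ^ 2 + (-815017/150000) * ν ^ 3 + (-59649/125000) * ν ^ 4 + (31341/125000) * ν ^ 5 := by
  linarith [mul_nonneg (pow_nonneg h0 0) (pow_nonneg hv1 5), mul_nonneg (pow_nonneg h0 1) (pow_nonneg hv1 4), mul_nonneg (pow_nonneg h0 2) (pow_nonneg hv1 3), mul_nonneg (pow_nonneg h0 3) (pow_nonneg hv1 2), mul_nonneg (pow_nonneg h0 4) (pow_nonneg hv1 1), mul_nonneg (pow_nonneg h0 5) (pow_nonneg hv1 0)]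

lemma f_poly (ν : ℝ) (h0 : 0 ≤ ν) (hv1 : 0 ≤ 1 - ν) :
    0 ≤ (27477/5) * ν ^ 0 + (-846016/75) * ν ^ 1 + (1239593/150) * ν ^ 2 + (-389532/125) * ν ^ 3 + (4179823/6000) * ν ^ 4 + (-15376/375) * ν ^ 5 := by
  linarith [mul_nonneg (pow_nonneg h0 0) (pow_nonneg hv1 5), mul_nonneg (pow_nonneg h0 1) (pow_nonneg hv1 4), mul_nonneg (pow_nonneg h0 2) (pow_nonneg hv1 3), mul_nonneg (pow_nonneg h0 3) (pow_nonneg hv1 2), mul_nonneg (pow_nonneg h0 4) (pow_nonneg hv1 1), mul_nonneg (pow_nonneg h0 5) (pow_nonneg hv1 0)]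

set_option maxHeartbeats 1000000 in
/-- The polynomial part. -/
lemma final_ineq (ν r D Y m : ℝ) (h0 : 0 < ν) (h1 : ν ≤ 1) (hr1 : 3 + 3 / 5 * ν ^ 2 ≤ r)
    (hr2 : r ≤ 3 + 2 / 3 * ν ^ 2 - 3 / 50 * ν ^ 4) (hrr : r ^ 2 = 9 + 4 * ν ^ 2)
    (hD : D = r - 4 * ν) (hY0 : 0 < Y)
    (hY : Y * ((r + 4 * ν) * (4 - ν ^ 2)) ≤ 36) (hm0 : 1.29 ≤ m) (hm : m ≤ 1.304) :
    0 ≤ (8 * (5 + 2 * ν ^ 2) - 4 / 9 * D ^ 2 - (4 - m) * D * Y - m * Y ^ 2) ^ 2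
      - 3584 * ν ^ 2 + 256 * ν * r * (1 - Y ^ 2 / 9) := by
  set p := 3 - 2.95 * ν + 1.55 * ν ^ 2 with hp
  set E := 3 - 4 * ν + 2 / 3 * ν ^ 2 - 3 / 50 * ν ^ 4 with hE
  have hDE : D ≤ E := by rw [hD, hE]; linarith
  have hv1 : 0 ≤ 1 - ν := by linarith
  have hppos : 1.5 ≤ p := by rw [hp]; nlinarith [sq_nonneg (ν - 0.95)]
  have hYp : Y ≤ p := by
    have hk : 36 ≤ p * ((3 + 3 / 5 * ν ^ 2 + 4 * ν) * (4 - ν ^ 2)) := by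
      have : 0 ≤ 12.6 - 30.4 * ν + 14.57 * ν ^ 2 + 9.07 * ν ^ 3 - 4.43 * ν ^ 4 - 0.93 * ν ^ 5 := by
        exact s_poly ν h0.le hv1
      have := mul_nonneg h0.le this
      rw [hp]
      linarith
    by_contra hc
    push Not at hc
    have g : 0 < 4 - ν ^ 2 := by nlinarith
    have : p * ((3 + 3 / 5 * ν ^ 2 + 4 * ν) * (4 - ν ^ 2)) < Y * ((r + 4 * ν) * (4 - ν ^ 2)) := by
      apply mul_lt_mul hc _ (by positivity) hY0.le
      gcongr
    linarith
  have hEp : E ≤ p := by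
    rw [hE, hp]
    nlinarith [mul_nonneg h0.le hv1, sq_nonneg (ν ^ 2)]
  have hElow : -0.4 ≤ E := by
    rw [hE]
    nlinarith [mul_nonneg h0.le hv1, pow_le_one₀ h0.le h1 (n := 4), sq_nonneg (1 - ν)]
  have hb : ν * (87 - 56 * ν + 23.25 * ν ^ 2) ≤
      8 * (5 + 2 * ν ^ 2) - 4 / 9 * D ^ 2 - (4 - m) * D * Y - m * Y ^ 2 := by
    have s1 : D ^ 2 ≤ 9 + 20 * ν ^ 2 - 8 * ν * (3 + 3 / 5 * ν ^ 2) := by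
      rw [hD]
      nlinarith
    have s2 : (4 - m) * D * Y ≤ (4 - m) * E * Y := by
      have : 0 ≤ 4 - m := by linarith
      gcongr
    have s3 : (4 - m) * E * Y + m * Y ^ 2 ≤ (4 - m) * E * p + m * p ^ 2 := by
      have : 0 ≤ (p - Y) * ((4 - m) * E + m * (p + Y)) := by
        apply mul_nonneg (by linarith)
        nlinarith
      linarith
    have s4 : (4 - m) * E * p + m * p ^ 2 ≤ 4 * E * p + 1.304 * (p * (p - E)) := by
      have : 0 ≤ (1.304 - m) * (p * (p - E)) := by
        apply mul_nonneg (by linarith)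
        apply mul_nonneg (by linarith) (by linarith)
      linarith
    have s5 : ν * (87 - 56 * ν + 23.25 * ν ^ 2) ≤ 8 * (5 + 2 * ν ^ 2)
        - 4 / 9 * (9 + 20 * ν ^ 2 - 8 * ν * (3 + 3 / 5 * ν ^ 2))
        - (4 * E * p + 1.304 * (p * (p - E))) := by
      have := mul_nonneg h0.le (b_poly ν h0.le hv1)
      rw [hE, hp]
      linarith
    linarith
  have hq0 : 0 ≤ 87 - 56 * ν + 23.25 * ν ^ 2 := by nlinarith [sq_nonneg (ν - 1)]
  have hb2 := pow_le_pow_left₀ (mul_nonneg h0.le hq0) hb 2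
  have hc : 256 * ν * (3 + 3 / 5 * ν ^ 2) * (1 - p ^ 2 / 9) ≤ 256 * ν * r * (1 - Y ^ 2 / 9) := by
    have hp3 : p ≤ 3 := by rw [hp]; nlinarith [mul_nonneg h0.le hv1]
    have hp9 := pow_le_pow_left₀ (by linarith : 0 ≤ p) hp3 2
    have : 0 ≤ 1 - p ^ 2 / 9 := by linarith
    have hr0 : 0 ≤ r := by nlinarith
    have hYp2 := pow_le_pow_left₀ hY0.le hYp 2
    have : 1 - p ^ 2 / 9 ≤ 1 - Y ^ 2 / 9 := by linarith
    gcongr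
  have hf : 0 ≤ (ν * (87 - 56 * ν + 23.25 * ν ^ 2)) ^ 2 - 3584 * ν ^ 2
      + 256 * ν * (3 + 3 / 5 * ν ^ 2) * (1 - p ^ 2 / 9) := by
    have := mul_nonneg (mul_nonneg h0.le h0.le) (f_poly ν h0.le hv1)
    rw [hp]
    linarith
  linarith

/-- For every ν ∈ (0,1] ∖ {√3/2} one has c₄(ν) ≥ 0. -/
theorem c4_nonneg (ν : ℝ) (hν : ν ∈ Set.Ioc (0 : ℝ) 1) (h : ν ≠ Real.sqrt 3 / 2) :
    0 ≤ c4 ν := by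
  obtain ⟨h0, h1⟩ := hν
  have hsq : ν ^ 2 ≠ 3 / 4 := by
    intro h'
    apply h
    have : Real.sqrt 3 = 2 * ν := by
      rw [show (3 : ℝ) = (2 * ν) ^ 2 by linarith, Real.sqrt_sq (by linarith)]
    linarith
  have hQ := slope_bound ν h0 h1 hsq
  have hpi1 := Real.pi_gt_d4
  have hpi2 := Real.pi_lt_d4
  unfold c4 eta c2
  rw [if_neg h]
  have hrr : Real.sqrt (9 + 4 * ν ^ 2) ^ 2 = 9 + 4 * ν ^ 2 := Real.sq_sqrt (by positivity)
  have hr0 : 0 < Real.sqrt (9 + 4 * ν ^ 2) := Real.sqrt_pos.mpr (by positivity)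
  have hnu : ν ^ 2 ≤ 1 := by nlinarith
  have hr1 : 3 + 3 / 5 * ν ^ 2 ≤ Real.sqrt (9 + 4 * ν ^ 2) := by
    apply Real.le_sqrt_of_sq_le
    nlinarith
  have hr2 : Real.sqrt (9 + 4 * ν ^ 2) ≤ 3 + 2 / 3 * ν ^ 2 - 3 / 50 * ν ^ 4 := by
    have h4 : ν ^ 4 ≤ 1 := pow_le_one₀ h0.le h1
    rw [Real.sqrt_le_left (by nlinarith)]
    have : 0 ≤ ν ^ 4 * (4 / 9 - 0.36 - 0.08 * ν ^ 2 + 0.0036 * ν ^ 4) := by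
      apply mul_nonneg (by positivity)
      have : 0 ≤ ν ^ 4 := by positivity
      nlinarith
    linarith
  set r := Real.sqrt (9 + 4 * ν ^ 2) with hr
  set W := w ν with hW
  have h34 : 3 - 4 * ν ^ 2 ≠ 0 := by
    intro h'
    apply hsq
    linarith
  set Q := (1 - 2 * W) / (3 - 4 * ν ^ 2) with hQd
  have hQpos : 0 < Q := by nlinarith
  have hWQ : 1 - 2 * W = Q * (3 - 4 * ν ^ 2) := by
    rw [hQd]
    field_simp
  have hX : 1 - 2 * W ≠ 0 := by
    rw [hWQ]
    exact mul_ne_zero hQpos.ne' h34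
  have hs : 0 < r + 4 * ν := by linarith
  set Y := 3 / ((r + 4 * ν) * Q) with hYd
  have hY0 : 0 < Y := by positivity
  have hDY : (r - 4 * ν) / (1 - 2 * W) = Y := by
    rw [hYd, div_eq_div_iff hX (by positivity), hWQ]
    linear_combination Q * hrr
  have hY : Y * ((r + 4 * ν) * (4 - ν ^ 2)) ≤ 36 := by
    have : Y * ((r + 4 * ν) * (4 - ν ^ 2)) = 3 * (4 - ν ^ 2) / Q := by
      rw [hYd]
      field_simp
    rw [this, div_le_iff₀ hQpos]
    linarith
  have key := final_ineq ν r (r - 4 * ν) Y ((Real.pi - 2) ^ 2) h0 h1 hr1 hr2 hrr rfl hY0 hY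
    (by nlinarith) (by nlinarith)
  have hpp : Real.pi - 2 ≠ 0 := by
    intro h'
    linarith
  have e1 : (r - 4 * ν) / (3 * (1 - 2 * W)) = Y / 3 := by
    rw [← hDY]
    field_simp
  rw [e1]
  convert key using 1
  have e2 : (16 * ν * r / 9 *
      (72 * (5 + 2 * ν ^ 2) - 1764 * ν / r + (r - 4 * ν) ^ 2 *
        (-4 + 9 * Real.pi ^ 2 * (Real.pi - 4) ^ 2 / (4 * (Real.pi - 2) ^ 2) -
          (3 * Real.pi * (4 - Real.pi) / (2 * (Real.pi - 2)) + 3 * (Real.pi - 2) / (1 - 2 * W)) ^ 2)) + 3136 * ν ^ 2)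
      = 16 * ν * r * (8 * (5 + 2 * ν ^ 2) - 4 / 9 * (r - 4 * ν) ^ 2
        - (4 - (Real.pi - 2) ^ 2) * (r - 4 * ν) * Y - (Real.pi - 2) ^ 2 * Y ^ 2) := by
    rw [← hDY]
    field_simp
    ring
  rw [e2, ← hrr]
  have : ν ≠ 0 := h0.ne'
  have : r ≠ 0 := hr0.ne'
  field_simp
  ring
end

section
/- For every ν ∈ (0,1] ∖ {√3/2} one has c₆(ν) ≥ 0. -/
/-- c₆(ν) := 2(c₂(ν)+3136ν²)(1−η_ν²)/(ν√(9+4ν²)) − 1024ν². -/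
noncomputable def c6 (ν : ℝ) : ℝ :=
  2 * (c2 ν + 3136 * ν ^ 2) * (1 - eta ν ^ 2) / (ν * Real.sqrt (9 + 4 * ν ^ 2))
    - 1024 * ν ^ 2

/-- Mittag-Leffler expansion of `y cot (π y / 2)` on `(0, 1]`. -/
lemma hasSum_cot_aux (y : ℝ) (h0 : 0 < y) (h1 : y ≤ 1) :
    HasSum (fun n : ℕ => 4 * y ^ 2 / (4 * ((n : ℝ) + 1) ^ 2 - y ^ 2))
      (2 - Real.pi * (y * Real.cot (Real.pi * y / 2))) := by
  have hz : (((y / 2 : ℝ)) : ℂ) ∈ Complex.integerComplement := by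
    rw [Complex.mem_integerComplement_iff]
    rintro ⟨n, hn⟩
    have hn' : (n : ℝ) = y / 2 := by exact_mod_cast hn
    have a1 : (0 : ℝ) < n := by rw [hn']; linarith
    have a2 : (n : ℝ) < 1 := by rw [hn']; linarith
    have b1 : 0 < n := by exact_mod_cast a1
    have b2 : n < 1 := by exact_mod_cast a2
    omega
  have hs := (summable_cotTerm hz).hasSum
  have he := cot_series_rep' hz
  rw [← he] at hs
  have hs2 : HasSum (fun n : ℕ => 1 / (y / 2 - ((n : ℝ) + 1)) + 1 / (y / 2 + ((n : ℝ) + 1)))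
      (Real.pi * Real.cot (Real.pi * (y / 2)) - 1 / (y / 2)) := by
    rw [← Complex.hasSum_ofReal]
    convert hs using 1
    · funext n
      simp [cotTerm]
    · push_cast [Complex.ofReal_cot]
      rfl
  have hs3 := hs2.mul_left (-y)
  have hterm : (fun n : ℕ => 4 * y ^ 2 / (4 * ((n : ℝ) + 1) ^ 2 - y ^ 2)) =
      fun n : ℕ => -y * (1 / (y / 2 - ((n : ℝ) + 1)) + 1 / (y / 2 + ((n : ℝ) + 1))) := by
    funext n
    have hn : (0 : ℝ) ≤ n := Nat.cast_nonneg n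
    have e1 : 4 * ((n : ℝ) + 1) ^ 2 - y ^ 2 ≠ 0 := by
      have : 0 < 4 * ((n : ℝ) + 1) ^ 2 - y ^ 2 := by nlinarith
      exact this.ne'
    have e2 : y / 2 - ((n : ℝ) + 1) ≠ 0 := by
      have : y / 2 - ((n : ℝ) + 1) < 0 := by linarith
      exact this.ne
    have e3 : y / 2 + ((n : ℝ) + 1) ≠ 0 := by positivity
    rw [div_add_div _ _ e2 e3, ← mul_div_assoc, div_eq_div_iff e1 (mul_ne_zero e2 e3)]
    ring
  have hval : 2 - Real.pi * (y * Real.cot (Real.pi * y / 2)) =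
      -y * (Real.pi * Real.cot (Real.pi * (y / 2)) - 1 / (y / 2)) := by
    rw [mul_div_assoc]
    field_simp
    ring
  rw [hterm, hval]
  exact hs3

/-- The key cotangent estimate. -/
lemma cot_key (y : ℝ) (h0 : 0 < y) (h1 : y ≤ 1) :
    0 ≤ (4 * y ^ 2 - 1) * ((4 - y ^ 2) * (1 - 2 * (y * Real.cot (Real.pi * y / 2)))
      - (4 * y ^ 2 - 1)) := by
  have H := hasSum_cot_aux y h0 h1
  have H1 := hasSum_cot_aux 1 one_pos le_rfl
  have Hq := hasSum_cot_aux (1 / 2) (by norm_num) (by norm_num)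
  have c1 : Real.cot (Real.pi * 1 / 2) = 0 := by
    rw [Real.cot_eq_cos_div_sin]; simp
  have cq : Real.cot (Real.pi * (1 / 2) / 2) = 1 := by
    rw [Real.cot_eq_cos_div_sin, show Real.pi * (1 / 2) / 2 = Real.pi / 4 by ring,
      Real.cos_pi_div_four, Real.sin_pi_div_four]
    exact div_self (by positivity)
  rw [c1] at H1
  rw [cq] at Hq
  have HH := (((H.sub Hq).mul_left (4 - y ^ 2)).sub
    ((H1.sub Hq).mul_left (4 * y ^ 2 - 1))).mul_left (4 * y ^ 2 - 1)
  have hnn := HH.nonneg (fun n => by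
    have hn : (0 : ℝ) ≤ n := Nat.cast_nonneg n
    obtain ⟨u, hu⟩ : ∃ u : ℝ, u = 4 * ((n : ℝ) + 1) ^ 2 := ⟨_, rfl⟩
    obtain ⟨t, ht⟩ : ∃ t : ℝ, t = y ^ 2 := ⟨_, rfl⟩
    have hu4 : 4 ≤ u := by nlinarith
    have ht1 : t ≤ 1 := by nlinarith
    have ht0 : 0 ≤ t := by nlinarith
    rw [← hu, ← ht]
    have p1 : 0 < u - t := by linarith
    have p2 : 0 < u - 1 := by linarith
    have p3 : 0 < u - 1 / 4 := by linarith
    have key : (4 * t - 1) * ((4 - t) * (4 * t / (u - t) - 4 * (1 / 2) ^ 2 / (u - (1 / 2) ^ 2)) -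
        (4 * t - 1) * (4 * 1 ^ 2 / (u - 1 ^ 2) - 4 * (1 / 2) ^ 2 / (u - (1 / 2) ^ 2)))
        = (4 * t - 1) ^ 2 * (u * ((u - 4) * (1 - t))) / ((u - t) * (u - 1) * (u - 1 / 4)) := by
      rw [show (4 : ℝ) * (1 / 2) ^ 2 = 1 by norm_num,
        show ((1 : ℝ) / 2) ^ 2 = 1 / 4 by norm_num, show (1 : ℝ) ^ 2 = 1 by norm_num,
        div_sub_div _ _ p1.ne' p3.ne', div_sub_div _ _ p2.ne' p3.ne', ← mul_div_assoc,
        ← mul_div_assoc, div_sub_div _ _ (mul_pos p1 p3).ne' (mul_pos p2 p3).ne',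
        ← mul_div_assoc, div_eq_div_iff
          (mul_pos (mul_pos p1 p3) (mul_pos p2 p3)).ne' (mul_pos (mul_pos p1 p2) p3).ne']
      ring
    rw [key]
    have := mul_nonneg (sub_nonneg.2 hu4) (sub_nonneg.2 ht1)
    positivity)
  have hpi := Real.pi_pos
  have e : (4 * y ^ 2 - 1) *
      ((4 - y ^ 2) *
        (2 - Real.pi * (y * Real.cot (Real.pi * y / 2)) - (2 - Real.pi * (1 / 2 * 1))) -
      (4 * y ^ 2 - 1) * (2 - Real.pi * (1 * 0) - (2 - Real.pi * (1 / 2 * 1)))) =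
      (Real.pi / 2) * ((4 * y ^ 2 - 1) * ((4 - y ^ 2) *
        (1 - 2 * (y * Real.cot (Real.pi * y / 2))) - (4 * y ^ 2 - 1))) := by ring
  rw [e] at hnn
  exact nonneg_of_mul_nonneg_right hnn (by positivity)

lemma w_key (ν : ℝ) (h0 : 0 < ν) (h1 : ν ≤ 1) :
    0 ≤ (3 - 4 * ν ^ 2) * ((3 + ν ^ 2) * (1 - 2 * w ν) - (3 - 4 * ν ^ 2)) := by
  by_cases hν : ν = 1
  · subst hν
    have hpi := Real.pi_pos
    have : (5 : ℝ) / 8 ≤ 2 / Real.pi := by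
      rw [div_le_div_iff₀ (by norm_num) hpi]
      linarith [Real.pi_lt_d2]
    simp only [w, if_true]
    nlinarith
  · have hlt : ν < 1 := lt_of_le_of_ne h1 hν
    have hp : 0 < 1 - ν ^ 2 := by nlinarith
    have hy : 0 < Ups ν := Real.sqrt_pos.2 hp
    have hsq : Ups ν ^ 2 = 1 - ν ^ 2 := Real.sq_sqrt hp.le
    have hy1 : Ups ν ≤ 1 := by nlinarith
    have := cot_key (Ups ν) hy hy1
    rw [hsq] at this
    simp only [w, if_neg hν]
    convert this using 1
    ring

/-- Simplified form of `c6`. -/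
lemma c6_eq (ν : ℝ) (h0 : 0 < ν) (h : ν ≠ Real.sqrt 3 / 2) :
    c6 ν = 32 / 9 * ((324 + 64 * ν ^ 2 + 32 * ν * Real.sqrt (9 + 4 * ν ^ 2)
      - 27 * (4 - (Real.pi - 2) ^ 2) * (Real.sqrt (9 + 4 * ν ^ 2) - 4 * ν) * eta ν
      - 81 * (Real.pi - 2) ^ 2 * eta ν ^ 2) * (1 - eta ν ^ 2)) - 1024 * ν ^ 2 := by
  have hs0 : 0 < Real.sqrt (9 + 4 * ν ^ 2) := Real.sqrt_pos.2 (by positivity)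
  have hs2 : Real.sqrt (9 + 4 * ν ^ 2) ^ 2 = 9 + 4 * ν ^ 2 := Real.sq_sqrt (by positivity)
  have hpi : Real.pi - 2 ≠ 0 := by
    have : 0 < Real.pi - 2 := by linarith [Real.pi_gt_three]
    exact this.ne'
  have heta : (Real.sqrt (9 + 4 * ν ^ 2) - 4 * ν) * (1 - 2 * w ν)⁻¹ = 3 * eta ν := by
    rw [eta, if_neg h, div_eq_mul_inv, mul_inv]
    ring
  unfold c6 c2
  rw [div_eq_mul_inv (3 * (Real.pi - 2)) (1 - 2 * w ν)]
  generalize eta ν = e at *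
  generalize (1 - 2 * w ν)⁻¹ = k at *
  generalize Real.sqrt (9 + 4 * ν ^ 2) = s at *
  have E : (s - 4 * ν) ^ 2 * (-4 + 9 * Real.pi ^ 2 * (Real.pi - 4) ^ 2 / (4 * (Real.pi - 2) ^ 2)
      - (3 * Real.pi * (4 - Real.pi) / (2 * (Real.pi - 2)) + 3 * (Real.pi - 2) * k) ^ 2)
      = -4 * (s - 4 * ν) ^ 2 - 9 * Real.pi * (4 - Real.pi) * (s - 4 * ν) * ((s - 4 * ν) * k)
        - 9 * (Real.pi - 2) ^ 2 * ((s - 4 * ν) * k) ^ 2 := by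
    field_simp
    ring
  rw [E, heta]
  have hd : (s - 4 * ν) ^ 2 = 9 + 20 * ν ^ 2 - 8 * ν * s := by linear_combination hs2
  rw [hd]
  field_simp
  ring

lemma poly1 (x : ℝ) (h0 : 0 ≤ x) (h1 : x ≤ 1) :
    288 * (3 + 4 * x) ^ 4 ≤
      (8640 + 9360 * x + 3072 * x ^ 2 + 1780 * x ^ 3) * (24 + 10 * x - x ^ 3) := by
  have a : 0 ≤ 1 - x := by linarith
  have b2 : x ^ 2 ≤ x := by nlinarith
  have b3 : x ^ 3 ≤ x ^ 2 := by nlinarith [mul_nonneg (mul_nonneg h0 h0) a]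
  have b4 : x ^ 4 ≤ x ^ 3 := by nlinarith [mul_nonneg (mul_nonneg (mul_nonneg h0 h0) h0) a]
  have b5 : x ^ 5 ≤ x ^ 3 := by nlinarith [mul_nonneg (pow_nonneg h0 4) a]
  have b6 : x ^ 6 ≤ x ^ 3 := by nlinarith [mul_nonneg (pow_nonneg h0 5) a]
  nlinarith

lemma low2 (ν V : ℝ) (h0 : 0 < ν) (h1 : ν ≤ 1) (hc : 3 ≤ 4 * ν ^ 2) (hV0 : 0 ≤ V)
    (hVa : V * (3 + 4 * ν) = 3 + ν ^ 2) :
    288 * ν ^ 2 ≤ (324 + 64 * ν ^ 2 + 96 * ν - 108 * V ^ 2) * (1 - V ^ 2) := by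
  have hν : 17 / 20 ≤ ν := by nlinarith
  have hV3 : V ≤ 4 / 7 + (1 - ν) / 10 := by
    have : V * (3 + 4 * ν) ≤ (4 / 7 + (1 - ν) / 10) * (3 + 4 * ν) := by
      rw [hVa]; nlinarith
    exact le_of_mul_le_mul_right this (by linarith)
  have hV4 : V ≤ 0.5865 := by linarith
  have hV5 : V ^ 2 ≤ 0.344 := by nlinarith
  have k1 : 0 ≤ 1 - V ^ 2 := by linarith
  rcases le_or_gt ν (95 / 100) with hb | hb
  · have : (416 : ℝ) ≤ 324 + 64 * ν ^ 2 + 96 * ν - 108 * V ^ 2 := by nlinarith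
    nlinarith
  · have hV6 : V ≤ 0.5765 := by linarith
    have hV7 : V ^ 2 ≤ 0.3325 := by nlinarith
    have : (437 : ℝ) ≤ 324 + 64 * ν ^ 2 + 96 * ν - 108 * V ^ 2 := by nlinarith
    nlinarith

/-- Final real-algebraic inequality. -/
lemma final_ineq_s12 (ν s m e : ℝ) (h0 : 0 < ν) (h1 : ν ≤ 1) (hs : 3 ≤ s) (hs2 : s ^ 2 = 9 + 4 * ν ^ 2)
    (hm0 : 0 ≤ m) (hm : m ≤ 4 / 3) (he0 : 0 ≤ e) (he : e * (s + 4 * ν) ≤ 3 + ν ^ 2) :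
    288 * ν ^ 2 ≤ (324 + 64 * ν ^ 2 + 32 * ν * s - 27 * (4 - m) * (s - 4 * ν) * e
      - 81 * m * e ^ 2) * (1 - e ^ 2) := by
  obtain ⟨a, ha⟩ : ∃ a : ℝ, a = 3 + 4 * ν := ⟨_, rfl⟩
  have ha0 : 0 < a := by linarith
  obtain ⟨V, hV⟩ : ∃ V : ℝ, V = (3 + ν ^ 2) / a := ⟨_, rfl⟩
  have hVa : V * a = 3 + ν ^ 2 := by rw [hV]; field_simp
  have hV0 : 0 ≤ V := by rw [hV]; positivity
  have heV : e ≤ V := by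
    rw [hV, le_div_iff₀ ha0, ha]
    nlinarith
  have hV1 : V ≤ 1 := by
    rw [hV, div_le_one ha0, ha]; nlinarith
  have he2 : e ^ 2 ≤ V ^ 2 := by gcongr
  have hV2 : V ^ 2 ≤ 1 := by nlinarith
  obtain ⟨D, hD⟩ : ∃ D : ℝ, D = (9 - 12 * ν ^ 2) / a := ⟨_, rfl⟩
  have hDa : D * a = 9 - 12 * ν ^ 2 := by rw [hD]; field_simp
  have hds : (s - 4 * ν) * (s + 4 * ν) = 9 - 12 * ν ^ 2 := by linear_combination hs2
  have hsp : 0 < s + 4 * ν := by linarith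
  have hns : 3 * ν ≤ ν * s := by nlinarith
  have a4 : 0 < a ^ 4 := by positivity
  have hP := poly1 ν h0.le h1
  rcases le_or_gt 0 (9 - 12 * ν ^ 2) with hc | hc
  · have hd0 : 0 ≤ s - 4 * ν := by
      by_contra hcon
      push Not at hcon
      nlinarith
    have hdD : s - 4 * ν ≤ D := by
      rw [hD, le_div_iff₀ ha0, ha, ← hds]
      nlinarith
    have hD0 : 0 ≤ D := hd0.trans hdD
    have hde : (s - 4 * ν) * e ≤ D * V := mul_le_mul hdD heV he0 hD0
    have hDV : D - 3 * V ≤ 0 := by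
      have : (D - 3 * V) * a ≤ 0 := by
        have : (D - 3 * V) * a = -(15 * ν ^ 2) := by linear_combination hDa - 3 * hVa
        rw [this]; nlinarith
      by_contra hcon
      push Not at hcon
      nlinarith [mul_pos hcon ha0]
    have hE : 324 + 64 * ν ^ 2 + 96 * ν - 72 * (D * V) - 108 * V ^ 2 ≤
        324 + 64 * ν ^ 2 + 32 * ν * s - 27 * (4 - m) * (s - 4 * ν) * e - 81 * m * e ^ 2 := by
      have t1 : (4 - m) * ((s - 4 * ν) * e) ≤ (4 - m) * (D * V) :=
        mul_le_mul_of_nonneg_left hde (by linarith)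
      have t2 : m * e ^ 2 ≤ m * V ^ 2 := mul_le_mul_of_nonneg_left he2 hm0
      have t3 : 0 ≤ (4 / 3 - m) * (V * (3 * V - D)) :=
        mul_nonneg (by linarith) (mul_nonneg hV0 (by linarith))
      nlinarith
    have hEV : (324 + 64 * ν ^ 2 + 96 * ν - 72 * (D * V) - 108 * V ^ 2) * a ^ 2 =
        ν * (8640 + 9360 * ν + 3072 * ν ^ 2 + 1780 * ν ^ 3) := by
      have : (324 + 64 * ν ^ 2 + 96 * ν - 72 * (D * V) - 108 * V ^ 2) * a ^ 2 =
        (324 + 64 * ν ^ 2 + 96 * ν) * a ^ 2 - 72 * ((D * a) * (V * a)) - 108 * (V * a) ^ 2 := by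
        ring
      rw [this, hDa, hVa, ha]; ring
    have hVV : (1 - V ^ 2) * a ^ 2 = ν * (24 + 10 * ν - ν ^ 3) := by
      have : (1 - V ^ 2) * a ^ 2 = a ^ 2 - (V * a) ^ 2 := by ring
      rw [this, hVa, ha]; ring
    have hE0 : 0 ≤ 324 + 64 * ν ^ 2 + 96 * ν - 72 * (D * V) - 108 * V ^ 2 := by
      have : 0 ≤ (324 + 64 * ν ^ 2 + 96 * ν - 72 * (D * V) - 108 * V ^ 2) * a ^ 2 := by
        rw [hEV]; positivity
      exact nonneg_of_mul_nonneg_left this (by positivity)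
    have hlow : 288 * ν ^ 2 ≤
        (324 + 64 * ν ^ 2 + 96 * ν - 72 * (D * V) - 108 * V ^ 2) * (1 - V ^ 2) := by
      refine le_of_mul_le_mul_right ?_ a4
      have : (324 + 64 * ν ^ 2 + 96 * ν - 72 * (D * V) - 108 * V ^ 2) * (1 - V ^ 2) * a ^ 4 =
        ((324 + 64 * ν ^ 2 + 96 * ν - 72 * (D * V) - 108 * V ^ 2) * a ^ 2) *
          ((1 - V ^ 2) * a ^ 2) := by ring
      rw [this, hEV, hVV, ha]
      have := mul_le_mul_of_nonneg_left hP (sq_nonneg ν)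
      nlinarith
    exact hlow.trans (mul_le_mul hE (by linarith) (by linarith) (hE0.trans hE))
  · have hd0 : s - 4 * ν ≤ 0 := by
      by_contra hcon
      push Not at hcon
      nlinarith [mul_pos hcon hsp]
    have hE : 324 + 64 * ν ^ 2 + 96 * ν - 108 * V ^ 2 ≤
        324 + 64 * ν ^ 2 + 32 * ν * s - 27 * (4 - m) * (s - 4 * ν) * e - 81 * m * e ^ 2 := by
      have t1 : 0 ≤ (4 - m) * ((4 * ν - s) * e) :=
        mul_nonneg (by linarith) (mul_nonneg (by linarith) he0)
      have t2 : m * e ^ 2 ≤ 4 / 3 * V ^ 2 := mul_le_mul hm he2 (sq_nonneg e) (by norm_num)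
      nlinarith
    have hE0 : 0 ≤ 324 + 64 * ν ^ 2 + 96 * ν - 108 * V ^ 2 := by linarith [sq_nonneg ν]
    have hlow := low2 ν V h0 h1 (by linarith) hV0 (by rw [← ha]; exact hVa)
    exact hlow.trans (mul_le_mul hE (by linarith) (by linarith) (hE0.trans hE))

/-- For every ν ∈ (0,1] ∖ {√3/2} one has c₆(ν) ≥ 0. -/
theorem c6_nonneg (ν : ℝ) (hν : ν ∈ Set.Ioc (0 : ℝ) 1) (h : ν ≠ Real.sqrt 3 / 2) :
    0 ≤ c6 ν := by
  obtain ⟨h0, h1⟩ := hν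
  rw [c6_eq ν h0 h]
  have hw := w_key ν h0 h1
  have hs0 : 0 < Real.sqrt (9 + 4 * ν ^ 2) := Real.sqrt_pos.2 (by positivity)
  have hs2 : Real.sqrt (9 + 4 * ν ^ 2) ^ 2 = 9 + 4 * ν ^ 2 := Real.sq_sqrt (by positivity)
  have hs3 : 3 ≤ Real.sqrt (9 + 4 * ν ^ 2) := Real.le_sqrt_of_sq_le (by nlinarith)
  have hne : 3 - 4 * ν ^ 2 ≠ 0 := by
    intro hcon
    apply h
    have : Real.sqrt 3 = 2 * ν := by
      rw [show (3 : ℝ) = (2 * ν) ^ 2 by linarith]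
      exact Real.sqrt_sq (by positivity)
    linarith
  have heta : eta ν * (3 * (1 - 2 * w ν)) * (Real.sqrt (9 + 4 * ν ^ 2) + 4 * ν)
      = 3 * (3 - 4 * ν ^ 2) := by
    have hK : 1 - 2 * w ν ≠ 0 := by
      intro hcon
      rw [hcon] at hw
      have : 0 < (3 - 4 * ν ^ 2) ^ 2 := by positivity
      nlinarith
    rw [eta, if_neg h, div_mul_cancel₀ _ (by simpa using hK)]
    linear_combination hs2
  have hpi1 := Real.pi_gt_three
  have hpi2 := Real.pi_lt_d2
  have hq : 0 < (3 - 4 * ν ^ 2) ^ 2 := by positivity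
  have hX : 0 ≤ eta ν * (Real.sqrt (9 + 4 * ν ^ 2) + 4 * ν) ∧
      eta ν * (Real.sqrt (9 + 4 * ν ^ 2) + 4 * ν) ≤ 3 + ν ^ 2 := by
    generalize eta ν = e at *
    generalize Real.sqrt (9 + 4 * ν ^ 2) = s at *
    obtain ⟨X, hX⟩ : ∃ X : ℝ, X = e * (s + 4 * ν) := ⟨_, rfl⟩
    rw [← hX]
    obtain ⟨q, hq'⟩ : ∃ q : ℝ, q = 3 - 4 * ν ^ 2 := ⟨_, rfl⟩
    obtain ⟨k, hk⟩ : ∃ k : ℝ, k = 1 - 2 * w ν := ⟨_, rfl⟩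
    rw [← hq', ← hk] at hw
    rw [← hq'] at hq
    have hXk : X * k = q := by
      rw [hX, hk, hq']; linear_combination heta / 3
    have hqk : 0 < q * k := by
      have : 0 < (3 + ν ^ 2) * (q * k) := by nlinarith
      exact pos_of_mul_pos_right this (by positivity)
    have hX0 : 0 < X * (k * k) := by rw [← mul_assoc, hXk]; exact hqk
    refine ⟨(pos_of_mul_pos_left hX0 (mul_self_nonneg k)).le, ?_⟩
    have : X * (q * k) ≤ (3 + ν ^ 2) * (q * k) := by
      have : X * (q * k) = q * q := by linear_combination q * hXk
      rw [this]; linarith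
    exact le_of_mul_le_mul_right this hqk
  have he0 : 0 ≤ eta ν := nonneg_of_mul_nonneg_left hX.1 (by positivity)
  have := final_ineq_s12 ν _ ((Real.pi - 2) ^ 2) (eta ν) h0 h1 hs3 hs2 (sq_nonneg _)
    (by nlinarith) he0 hX.2
  linarith
end

section
/- For every ν ∈ [0,1], setting b_ν := 1 − ((√(225+4ν²) − 8ν)/15)², one has for every integer κ with |κ| ≥ 2 and every τ ∈ ℝ the inequality ν² + b_ν/4 + κ²·b_ν + τ²·b_ν ≥ √(4κ²ν² + 4ν²τ² + κ²·b_ν²). -/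
/-- b_ν := 1 − ((√(225+4ν²) − 8ν)/15)². -/
noncomputable def bnu (ν : ℝ) : ℝ :=
  1 - ((Real.sqrt (225 + 4 * ν ^ 2) - 8 * ν) / 15) ^ 2

/-- For ν ∈ [0,1], every integer κ with |κ| ≥ 2 and every τ ∈ ℝ:
ν² + b_ν/4 + κ²b_ν + τ²b_ν ≥ √(4κ²ν² + 4ν²τ² + κ²b_ν²). -/
theorem noncritical_channel_ineq (ν : ℝ) (hν : ν ∈ Set.Icc (0 : ℝ) 1) (κ : ℤ)
    (hκ : 2 ≤ |κ|) (τ : ℝ) :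
    Real.sqrt (4 * (κ : ℝ) ^ 2 * ν ^ 2 + 4 * ν ^ 2 * τ ^ 2 + (κ : ℝ) ^ 2 * bnu ν ^ 2)
      ≤ ν ^ 2 + bnu ν / 4 + (κ : ℝ) ^ 2 * bnu ν + τ ^ 2 * bnu ν := by
  obtain ⟨h0, h1⟩ := hν
  have hk : (4 : ℝ) ≤ (κ : ℝ) ^ 2 := by
    have h2 : (2 : ℝ) ≤ |(κ : ℝ)| := by exact_mod_cast hκ
    rw [← sq_abs]
    nlinarith
  set r := Real.sqrt (225 + 4 * ν ^ 2) with hr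
  have hr2 : r ^ 2 = 225 + 4 * ν ^ 2 := Real.sq_sqrt (by positivity)
  have hr15 : 15 ≤ r := Real.le_sqrt_of_sq_le (by nlinarith)
  have hb : bnu ν = (16 * ν * r - 68 * ν ^ 2) / 225 := by
    unfold bnu
    rw [← hr]
    linear_combination (-1 / 225) * hr2
  have hquad : (ν ^ 2 + 17 / 4 * bnu ν) ^ 2 = 4 * (4 * ν ^ 2 + bnu ν ^ 2) := by
    rw [hb]
    linear_combination (16 * ν ^ 2 / 225) * hr2
  have hbν : 4 / 15 * ν ^ 2 ≤ bnu ν := by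
    rw [hb]
    nlinarith [mul_le_mul_of_nonneg_left hr15 h0, mul_nonneg h0 (sub_nonneg.2 h1)]
  generalize bnu ν = b at *
  generalize (κ : ℝ) ^ 2 = k at *
  have hb0 : 0 ≤ b := by nlinarith [sq_nonneg ν]
  have ht : 0 ≤ τ ^ 2 := sq_nonneg τ
  generalize τ ^ 2 = t at *
  have hA : (ν ^ 2 + b / 4) ^ 2 ≤ (4 * b) ^ 2 :=
    pow_le_pow_left₀ (by positivity) (by linarith) 2
  apply Real.sqrt_le_iff.2
  constructor
  · have : 0 ≤ k := by linarith
    positivity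
  · have h3 : 0 ≤ (k + t - 4) * (b ^ 2 * (k + t) - (ν ^ 2 + b / 4) ^ 2 / 4) := by
      apply mul_nonneg (by linarith)
      nlinarith [mul_nonneg (sq_nonneg b) (by linarith : 0 ≤ k + t - 4)]
    have h4 : 0 ≤ t * b ^ 2 := by positivity
    have h5 : (ν ^ 2 + b / 4 + k * b + t * b) ^ 2
        - (4 * k * ν ^ 2 + 4 * ν ^ 2 * t + k * b ^ 2)
        = (k + t - 4) * (b ^ 2 * (k + t) - (ν ^ 2 + b / 4) ^ 2 / 4) + t * b ^ 2 := by
      linear_combination ((k + t) / 4) * hquad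
    linarith
end
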